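/- arXiv:1704.06916 — 4 statements merged into one kernel-verified Lean document; each statement's English description precedes it below -/
import Mathlib

section
/- Let ε > 0 and let c, p ∈ ℝ² with ‖p − c‖ > ε. Let S ⊆ ℝ² be a nonempty finite set such that every s ∈ S satisfies ‖s − c‖ > ε and ‖s − p‖ < ε. Then the centroid q̄ = (1/|S|)·∑_{s ∈ S} s of S satisfies ‖q̄ − c‖ > ε/2. -/
/-!
Every `s ∈ S` is closer to `p` than to `c`, so `S` lies in the open half-plane
`⟪s - c, p - c⟫ > ‖p - c‖² / 2` cut off by the perpendicular bisector of `c` and `p`.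
The centroid inherits this inequality by averaging, and Cauchy–Schwarz turns it into
`‖q - c‖ > ‖p - c‖ / 2 > ε / 2`.
-/

/-- Translated form of the key lemma in the proof of Theorem 1 of the paper: if
`‖p - c‖ > ε` and `S` is a nonempty finite set of points all lying outside the ball
`B_ε(c)` and inside the ball `B_ε(p)`, then the centroid of `S` is at distance more
than `ε / 2` from `c`. -/
theorem centroid_far_from_center (ε : ℝ) (hε : 0 < ε)
    (c p : EuclideanSpace ℝ (Fin 2)) (hpc : ε < ‖p - c‖)
    (S : Finset (EuclideanSpace ℝ (Fin 2))) (hS : S.Nonempty)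
    (hfar : ∀ s ∈ S, ε < ‖s - c‖) (hnear : ∀ s ∈ S, ‖s - p‖ < ε) :
    ε / 2 < ‖(S.card : ℝ)⁻¹ • (∑ s ∈ S, s) - c‖ := by
  have hcard : (0 : ℝ) < S.card := by exact_mod_cast hS.card_pos
  have half_plane : ∀ s ∈ S, ‖p - c‖ ^ 2 / 2 < inner ℝ (s - c) (p - c) := by
    intro s hs
    have h := norm_sub_sq_real (s - c) (p - c)
    rw [sub_sub_sub_cancel_right] at h
    nlinarith [hfar s hs, hnear s hs, norm_nonneg (s - p)]
  have hsum : (S.card : ℝ) * (‖p - c‖ ^ 2 / 2) < ∑ s ∈ S, inner ℝ (s - c) (p - c) := by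
    simpa using Finset.sum_lt_sum_of_nonempty hS half_plane
  have hcentroid : (S.card : ℝ)⁻¹ • (∑ s ∈ S, s) - c
      = (S.card : ℝ)⁻¹ • ∑ s ∈ S, (s - c) := by
    rw [Finset.sum_sub_distrib, Finset.sum_const, smul_sub, ← Nat.cast_smul_eq_nsmul ℝ,
      inv_smul_smul₀ hcard.ne']
  have hmean : ‖p - c‖ ^ 2 / 2
      < inner ℝ ((S.card : ℝ)⁻¹ • (∑ s ∈ S, s) - c) (p - c) := by
    rw [hcentroid, real_inner_smul_left, sum_inner, inv_mul_eq_div, lt_div_iff₀ hcard]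
    linarith
  have hcs := real_inner_le_norm ((S.card : ℝ)⁻¹ • (∑ s ∈ S, s) - c) (p - c)
  nlinarith
end

section
/- Let ε > 0 and let Θ_def ⊆ ℝ² be a finite (ε/2)-separable set. Let q̄₁, …, q̄_n ∈ ℝ² be points such that for each k = 1, …, n there exist a nonempty finite set S_k ⊆ ℝ² and a point p_k ∈ S_k with: (i) every s ∈ S_k satisfies ‖s − c‖ > ε for every c ∈ Θ_def ∪ {q̄₁, …, q̄_{k−1}}; (ii) ‖s − p_k‖ < ε for every s ∈ S_k; and (iii) q̄_k is the centroid (1/|S_k|)·∑_{s ∈ S_k} s of S_k. Then the set Θ_def ∪ {q̄₁, …, q̄_n} is (ε/2)-separable. -/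
/-!
The key fact is that a centroid of points lying outside the ball of radius `ε` about an existing
center `c`, and within `ε` of one of them, `p`, stays at distance at least `ε / 2` from `c`.
Indeed, with `c` as origin, `‖s‖ > ε > ‖s - p‖` puts every such point `s` in the half-plane
`⟪s, p⟫ > ‖p‖² / 2`, which is convex and hence contains the centroid `q`. By Cauchy–Schwarz,
`‖q‖ ≥ ‖p‖ / 2 > ε / 2`. The theorem is this fact (`centroid_far`), applied to the later of the
two centers under comparison.
-/

/-- The centroid of points close to `p` and far from `c` is far from `c`. -/
lemma centroid_far {E : Type*} [NormedAddCommGroup E] [InnerProductSpace ℝ E]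
    {ε : ℝ} (hε : 0 < ε) (T : Finset E) (p c : E) (hp : p ∈ T)
    (hfar : ∀ s ∈ T, ε < ‖s - c‖) (hnear : ∀ s ∈ T, ‖s - p‖ < ε) :
    ε / 2 ≤ ‖(T.card : ℝ)⁻¹ • ∑ s ∈ T, s - c‖ := by
  have hcard : (0 : ℝ) < T.card := by exact_mod_cast Finset.card_pos.2 ⟨p, hp⟩
  have hpc := hfar p hp
  have hhalf : ∀ s ∈ T, ‖p - c‖ ^ 2 / 2 ≤ inner ℝ (s - c) (p - c) := by
    intro s hs
    have h := norm_sub_sq_real (s - c) (p - c)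
    rw [sub_sub_sub_cancel_right] at h
    have hlt : ‖s - p‖ ^ 2 < ‖s - c‖ ^ 2 := by
      have := (hnear s hs).trans (hfar s hs)
      gcongr
    linarith
  have hq : (T.card : ℝ)⁻¹ • ∑ s ∈ T, s - c = (T.card : ℝ)⁻¹ • ∑ s ∈ T, (s - c) := by
    rw [Finset.sum_sub_distrib, Finset.sum_const, smul_sub, ← Nat.cast_smul_eq_nsmul ℝ,
      inv_smul_smul₀ hcard.ne']
  have hin : ‖p - c‖ ^ 2 / 2 ≤ inner ℝ ((T.card : ℝ)⁻¹ • ∑ s ∈ T, s - c) (p - c) := by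
    rw [hq, real_inner_smul_left, sum_inner, le_inv_mul_iff₀ hcard, ← nsmul_eq_mul]
    exact Finset.card_nsmul_le_sum T _ _ hhalf
  have hcs := real_inner_le_norm ((T.card : ℝ)⁻¹ • ∑ s ∈ T, s - c) (p - c)
  have hmul : ‖p - c‖ / 2 ≤ ‖(T.card : ℝ)⁻¹ • ∑ s ∈ T, s - c‖ := by
    refine le_of_mul_le_mul_right ?_ (hε.trans hpc)
    linarith
  linarith

/-- Theorem 1 of the paper, stated abstractly: if the predefined set `Θ_def` is
`(ε/2)`-separable, and each new center `q̄ k` is the centroid of a nonempty finite set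
`S k` of points (containing the seed point `p k`) all of which are at distance more than
`ε` from every previous center (points of `Θ_def` and the earlier `q̄ j`) and within
distance `ε` of the seed point `p k`, then `Θ_def ∪ {q̄ 1, …, q̄ n}` is `(ε/2)`-separable. -/
theorem phaseSep_separable (ε : ℝ) (hε : 0 < ε)
    (Θdef : Finset (EuclideanSpace ℝ (Fin 2)))
    (hsep : ∀ a ∈ Θdef, ∀ b ∈ Θdef, a ≠ b → ε / 2 ≤ ‖a - b‖)
    (n : ℕ) (qbar : Fin n → EuclideanSpace ℝ (Fin 2))
    (S : Fin n → Finset (EuclideanSpace ℝ (Fin 2)))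
    (p : Fin n → EuclideanSpace ℝ (Fin 2))
    (hpS : ∀ k, p k ∈ S k)
    (hfar : ∀ k, ∀ s ∈ S k,
      (∀ c ∈ Θdef, ε < ‖s - c‖) ∧ (∀ j, j < k → ε < ‖s - qbar j‖))
    (hnear : ∀ k, ∀ s ∈ S k, ‖s - p k‖ < ε)
    (hcent : ∀ k, qbar k = ((S k).card : ℝ)⁻¹ • ∑ s ∈ S k, s) :
    ∀ a ∈ (↑Θdef ∪ Set.range qbar : Set (EuclideanSpace ℝ (Fin 2))),
      ∀ b ∈ (↑Θdef ∪ Set.range qbar : Set (EuclideanSpace ℝ (Fin 2))),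
        a ≠ b → ε / 2 ≤ ‖a - b‖ := by
  have hdef : ∀ k, ∀ c ∈ Θdef, ε / 2 ≤ ‖qbar k - c‖ := fun k c hc => by
    rw [hcent k]
    exact centroid_far hε (S k) (p k) c (hpS k) (fun s hs => (hfar k s hs).1 c hc) (hnear k)
  have hnew : ∀ k j, j < k → ε / 2 ≤ ‖qbar k - qbar j‖ := fun k j hj => by
    rw [hcent k]
    exact centroid_far hε (S k) (p k) _ (hpS k) (fun s hs => (hfar k s hs).2 j hj) (hnear k)
  rintro a (ha | ⟨k, rfl⟩) b (hb | ⟨j, rfl⟩) hab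
  · exact hsep a ha b hb hab
  · rw [norm_sub_rev]
    exact hdef j a ha
  · exact hdef k b hb
  · rcases lt_trichotomy j k with h | rfl | h
    · exact hnew k j h
    · exact absurd rfl hab
    · rw [norm_sub_rev]
      exact hnew j k h
end

section
/- Let x₀ ∈ ℝ², h₀ > 0, and let A, φ : ℝ² → ℝ be twice continuously differentiable on the closed ball of radius h₀ around x₀. Then there exists a constant C > 0 such that for all ω ≥ 1, all h with 0 < h ≤ h₀, and all x with ‖x − x₀‖ ≤ h, one has |A(x)·e^{iωφ(x)} − (A(x₀) + ∇A(x₀)·(x − x₀))·e^{iω(φ(x₀) + ∇φ(x₀)·(x − x₀))}| ≤ C·(h² + ω·h²). -/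
open scoped InnerProductSpace

/-!
Writing `T f` for the first-order Taylor polynomial of `f` at `x₀`, the error splits as
`A (e^{iωφ} - e^{iω Tφ}) + (A - T A) e^{iω Tφ}`.  Since `A` is bounded on the compact ball and
`t ↦ e^{it}` is 1-Lipschitz, the first term is `O(ω |φ - T φ|)`, and the second is `|A - T A|`.
Both Taylor remainders are `O(‖x - x₀‖²)` (`exists_taylor_bound`), because the derivative of a
`C²` function on the compact convex ball is Lipschitz there.
-/

/-- Second-order Taylor remainder bound on a closed ball, from the mean value inequality on the
smaller ball of radius `‖x - x₀‖` together with the Lipschitz bound on the derivative. -/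
lemma exists_taylor_bound (x₀ : EuclideanSpace ℝ (Fin 2)) (h₀ : ℝ) (hh₀ : 0 < h₀)
    (f : EuclideanSpace ℝ (Fin 2) → ℝ)
    (hf : ContDiffOn ℝ 2 f (Metric.closedBall x₀ h₀)) :
    ∃ K : ℝ, 0 ≤ K ∧ ∀ x, ‖x - x₀‖ ≤ h₀ →
      |f x - (f x₀ + ⟪gradient f x₀, x - x₀⟫_ℝ)| ≤ K * ‖x - x₀‖ ^ 2 := by
  set S := Metric.closedBall x₀ h₀ with hS
  have hconv : Convex ℝ S := convex_closedBall x₀ h₀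
  have hx₀ : x₀ ∈ S := Metric.mem_closedBall_self hh₀.le
  have hnhds : S ∈ nhds x₀ := Metric.closedBall_mem_nhds x₀ hh₀
  have huniq : UniqueDiffOn ℝ S :=
    uniqueDiffOn_convex hconv ⟨x₀, mem_interior_iff_mem_nhds.mpr hnhds⟩
  have hdf : ContDiffOn ℝ 1 (fderivWithin ℝ f S) S :=
    hf.fderivWithin huniq (by norm_num)
  obtain ⟨K, hK⟩ := hdf.exists_lipschitzOnWith (by norm_num) hconv
    (isCompact_closedBall x₀ h₀)
  refine ⟨K, K.2, fun x hx => ?_⟩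
  have hsub : Metric.closedBall x₀ ‖x - x₀‖ ⊆ S := Metric.closedBall_subset_closedBall hx
  have hmvt := (convex_closedBall x₀ ‖x - x₀‖).norm_image_sub_le_of_norm_hasFDerivWithin_le'
    (f := f) (f' := fderivWithin ℝ f S) (φ := fderivWithin ℝ f S x₀) (C := K * ‖x - x₀‖)
    (x := x₀) (y := x)
    (fun y hy => (((hf.differentiableOn (by norm_num)) y (hsub hy)).hasFDerivWithinAt).mono hsub)
    (fun y hy => by
      refine (hK.norm_sub_le (hsub hy) hx₀).trans ?_
      gcongr
      simpa [dist_eq_norm] using hy)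
    (Metric.mem_closedBall_self (norm_nonneg _))
    (by simp [dist_eq_norm])
  -- `x₀` is interior, so the derivative within the ball is the one defining the gradient.
  have hgrad : ⟪gradient f x₀, x - x₀⟫_ℝ = fderivWithin ℝ f S x₀ (x - x₀) := by
    rw [fderivWithin_of_mem_nhds hnhds, gradient, InnerProductSpace.toDual_symm_apply]
  rw [hgrad, ← sub_sub, ← Real.norm_eq_abs, sq, ← mul_assoc]
  exact hmvt

lemma norm_exp_I_sub_exp_I_le (a b : ℝ) :
    ‖Complex.exp (Complex.I * (a : ℂ)) - Complex.exp (Complex.I * (b : ℂ))‖ ≤ |a - b| := by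
  have h : Complex.exp (Complex.I * (a : ℂ)) - Complex.exp (Complex.I * (b : ℂ)) =
      Complex.exp (Complex.I * (b : ℂ)) * (Complex.exp (Complex.I * ((a - b : ℝ) : ℂ)) - 1) := by
    rw [mul_sub, ← Complex.exp_add, mul_one]
    congr 2
    push_cast
    ring
  rw [h, norm_mul, Complex.norm_exp_I_mul_ofReal, one_mul, ← Real.norm_eq_abs]
  exact Real.norm_exp_I_mul_ofReal_sub_one_le

/-- Local approximation estimate (7) of the paper (without the `O(ω⁻¹)` term):
replacing the amplitude `A` by its first-order Taylor polynomial and the phase `φ` in the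
exponent by its first-order Taylor polynomial around the cell center `x₀` incurs an error
of order `O(h² + ω h²)` on a cell of size `h`. -/
theorem planewave_local_approx (x₀ : EuclideanSpace ℝ (Fin 2)) (h₀ : ℝ) (hh₀ : 0 < h₀)
    (A φ : EuclideanSpace ℝ (Fin 2) → ℝ)
    (hA : ContDiffOn ℝ 2 A (Metric.closedBall x₀ h₀))
    (hφ : ContDiffOn ℝ 2 φ (Metric.closedBall x₀ h₀)) :
    ∃ C > 0, ∀ ω : ℝ, 1 ≤ ω → ∀ h : ℝ, 0 < h → h ≤ h₀ →
      ∀ x : EuclideanSpace ℝ (Fin 2), ‖x - x₀‖ ≤ h →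
        ‖(A x : ℂ) * Complex.exp (Complex.I * ((ω * φ x : ℝ) : ℂ)) -
            ((A x₀ + ⟪gradient A x₀, x - x₀⟫_ℝ : ℝ) : ℂ) *
              Complex.exp
                (Complex.I * ((ω * (φ x₀ + ⟪gradient φ x₀, x - x₀⟫_ℝ) : ℝ) : ℂ))‖ ≤
          C * (h ^ 2 + ω * h ^ 2) := by
  obtain ⟨KA, hKA0, hKA⟩ := exists_taylor_bound x₀ h₀ hh₀ A hA
  obtain ⟨Kφ, hKφ0, hKφ⟩ := exists_taylor_bound x₀ h₀ hh₀ φ hφ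
  obtain ⟨M, hM⟩ := (isCompact_closedBall x₀ h₀).exists_bound_of_continuousOn hA.continuousOn
  have hM0 : 0 ≤ M := (norm_nonneg _).trans (hM x₀ (Metric.mem_closedBall_self hh₀.le))
  refine ⟨M * Kφ + KA + 1, by positivity, fun ω hω h hh hle x hx => ?_⟩
  have hAx : |A x| ≤ M := hM x (by simpa [dist_eq_norm] using hx.trans hle)
  have hsq : ‖x - x₀‖ ^ 2 ≤ h ^ 2 := by gcongr
  have h1 := (hKA x (hx.trans hle)).trans (mul_le_mul_of_nonneg_left hsq hKA0)
  have h2 := (hKφ x (hx.trans hle)).trans (mul_le_mul_of_nonneg_left hsq hKφ0)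
  set TA := A x₀ + ⟪gradient A x₀, x - x₀⟫_ℝ
  set Tφ := φ x₀ + ⟪gradient φ x₀, x - x₀⟫_ℝ
  have hω0 : 0 ≤ ω := by linarith
  have hexp : ‖Complex.exp (Complex.I * ((ω * φ x : ℝ) : ℂ)) -
      Complex.exp (Complex.I * ((ω * Tφ : ℝ) : ℂ))‖ ≤ ω * (Kφ * h ^ 2) := by
    refine (norm_exp_I_sub_exp_I_le _ _).trans ?_
    rw [← mul_sub, abs_mul, abs_of_nonneg hω0]
    gcongr
  have hsplit : (A x : ℂ) * Complex.exp (Complex.I * ((ω * φ x : ℝ) : ℂ)) -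
      (TA : ℂ) * Complex.exp (Complex.I * ((ω * Tφ : ℝ) : ℂ)) =
      (A x : ℂ) * (Complex.exp (Complex.I * ((ω * φ x : ℝ) : ℂ)) -
        Complex.exp (Complex.I * ((ω * Tφ : ℝ) : ℂ))) +
      ((A x - TA : ℝ) : ℂ) * Complex.exp (Complex.I * ((ω * Tφ : ℝ) : ℂ)) := by
    rw [Complex.ofReal_sub]
    ring
  rw [hsplit]
  refine (norm_add_le _ _).trans ?_
  rw [norm_mul, norm_mul, Complex.norm_exp_I_mul_ofReal, mul_one, Complex.norm_real,
    Complex.norm_real, Real.norm_eq_abs, Real.norm_eq_abs]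
  have h3 := mul_le_mul hAx hexp (norm_nonneg _) hM0
  have p1 : 0 ≤ M * Kφ * h ^ 2 := by positivity
  have p2 : 0 ≤ KA * (ω * h ^ 2) := by positivity
  have p3 : 0 ≤ h ^ 2 + ω * h ^ 2 := by positivity
  linarith
end

section
/- Let c : ℝ² → ℝ be continuously differentiable with c(x) > 0 for all x, and let φ : ℝ² × ℝ → ℝ be twice continuously differentiable with ∇ₓφ(x,t) ≠ 0 for all (x,t), satisfying the eikonal equation ∂ₜφ(x,t) + c(x)·‖∇ₓφ(x,t)‖ = 0 for all (x,t). Let x : ℝ → ℝ² be differentiable with x′(t) = c(x(t))·∇ₓφ(x(t),t)/‖∇ₓφ(x(t),t)‖ for all t, and define p(t) := ∇ₓφ(x(t), t). Then p is differentiable and p′(t) = −‖p(t)‖·∇c(x(t)) for all t; that is, the pair (x(t), p(t)) solves the ray (bicharacteristic) system x′ = c(x)·p/‖p‖, p′ = −‖p‖·∇c(x). -/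
/-!
Write `G(x,t) = ∇ₓφ(x,t)`, a `C¹` map, and `D²φ` for the second derivative of `φ` on `ℝ² × ℝ`.
The chain rule gives `p' = DG (x', 1)`, so `⟪p', u⟫ = D²φ (x', 1) (u, 0)` for every `u`.
By symmetry of the second derivative this is `⟪DG (u, 0), x'⟫ + D²φ (u, 0) (0, 1)`.
Differentiating the eikonal equation in the spatial direction `u` gives
`D²φ (u, 0) (0, 1) + ‖G‖ ⟪∇c, u⟫ + c ⟪G, DG (u, 0)⟫ / ‖G‖ = 0`; since `x' = c G / ‖G‖`, the last
term equals `⟪DG (u, 0), x'⟫`, and the two identities combine to `⟪p', u⟫ = -‖p‖ ⟪∇c, u⟫`.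
-/

section RayHelpers

variable {E : Type*} [NormedAddCommGroup E] [InnerProductSpace ℝ E]

theorem deriv_slice {φ : E × ℝ → ℝ} (hφ : Differentiable ℝ φ) (x : E) (t : ℝ) :
    deriv (fun τ => φ (x, τ)) t = fderiv ℝ φ (x, t) (0, 1) := by
  have h : HasDerivAt (fun τ => φ (x, τ)) (fderiv ℝ φ (x, t) (0, 1)) t :=
    (hφ (x, t)).hasFDerivAt.comp_hasDerivAt t
      ((hasDerivAt_const t x).prodMk (hasDerivAt_id t))
  exact h.deriv

/-- Derivative of the norm along a curve that does not vanish at the base point. -/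
theorem hasDerivAt_norm_curve {g : ℝ → E} {g' : E} {s : ℝ} (hg : HasDerivAt g g' s)
    (h0 : g s ≠ 0) : HasDerivAt (fun r => ‖g r‖) (inner ℝ (g s) g' / ‖g s‖) s := by
  have h := hg.norm_sq.sqrt (pow_ne_zero 2 (norm_ne_zero_iff.mpr h0))
  simp only [Real.sqrt_sq (norm_nonneg _)] at h
  convert h using 1
  rw [mul_div_mul_left _ _ two_ne_zero]

variable [CompleteSpace E]

/-- Restriction of a functional on `E × ℝ` to `E`, followed by the Riesz identification; it sends
the full derivative of `φ` to its spatial gradient. -/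
noncomputable def rieszFst : (E × ℝ →L[ℝ] ℝ) →L[ℝ] E :=
  { toFun := fun L => (InnerProductSpace.toDual ℝ E).symm (L.comp (ContinuousLinearMap.inl ℝ E ℝ))
    map_add' := fun L M => by rw [ContinuousLinearMap.add_comp, map_add]
    map_smul' := fun r L => by
      rw [ContinuousLinearMap.smul_comp, LinearIsometryEquiv.map_smulₛₗ]; rfl
    cont := (InnerProductSpace.toDual ℝ E).symm.continuous.comp
      ((ContinuousLinearMap.compL ℝ E (E × ℝ) ℝ).flip (ContinuousLinearMap.inl ℝ E ℝ)).continuous }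

theorem inner_rieszFst (L : E × ℝ →L[ℝ] ℝ) (u : E) :
    inner ℝ (rieszFst L) u = L (u, 0) := by
  change inner ℝ ((InnerProductSpace.toDual ℝ E).symm
    (L.comp (ContinuousLinearMap.inl ℝ E ℝ))) u = L (u, 0)
  simp

theorem gradient_slice {φ : E × ℝ → ℝ} (hφ : Differentiable ℝ φ) (x : E) (t : ℝ) :
    gradient (fun y => φ (y, t)) x = rieszFst (fderiv ℝ φ (x, t)) := by
  have h : HasFDerivAt (fun y => φ (y, t))
      ((fderiv ℝ φ (x, t)).comp (ContinuousLinearMap.inl ℝ E ℝ)) x :=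
    (hφ (x, t)).hasFDerivAt.comp x (hasFDerivAt_prodMk_left x t)
  rw [gradient, h.fderiv]
  rfl

/-- Chain rule for the spatial gradient of `φ` along a curve in `E × ℝ`. -/
theorem hasDerivAt_rieszFst_curve {φ : E × ℝ → ℝ} (hD : Differentiable ℝ (fderiv ℝ φ))
    {γ : ℝ → E × ℝ} {v : E × ℝ} {s : ℝ} (hγ : HasDerivAt γ v s) :
    HasDerivAt (fun r => rieszFst (fderiv ℝ φ (γ r)))
      (rieszFst (fderiv ℝ (fderiv ℝ φ) (γ s) v)) s := by
  have h : HasFDerivAt (fun z => rieszFst (fderiv ℝ φ z))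
      ((rieszFst (E := E)).comp (fderiv ℝ (fderiv ℝ φ) (γ s))) (γ s) :=
    HasFDerivAt.comp (𝕜 := ℝ) (E := E × ℝ) (F := E × ℝ →L[ℝ] ℝ) (G := E) (γ s)
      (rieszFst (E := E)).hasFDerivAt (hD (γ s)).hasFDerivAt
  exact h.comp_hasDerivAt s hγ

/-- The eikonal equation differentiated in the spatial direction `u`. -/
theorem eikonal_deriv {c : E → ℝ} (hc : Differentiable ℝ c) {φ : E × ℝ → ℝ}
    (hD : Differentiable ℝ (fderiv ℝ φ))
    (hne : ∀ z, rieszFst (fderiv ℝ φ z) ≠ 0)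
    (heik : ∀ (x : E) (t : ℝ),
      fderiv ℝ φ (x, t) (0, 1) + c x * ‖rieszFst (fderiv ℝ φ (x, t))‖ = 0)
    (x : E) (t : ℝ) (u : E) :
    fderiv ℝ (fderiv ℝ φ) (x, t) (u, 0) (0, 1)
      + (inner ℝ (gradient c x) u * ‖rieszFst (fderiv ℝ φ (x, t))‖
        + c x * (inner ℝ (rieszFst (fderiv ℝ φ (x, t)))
          (rieszFst (fderiv ℝ (fderiv ℝ φ) (x, t) (u, 0)))
            / ‖rieszFst (fderiv ℝ φ (x, t))‖)) = 0 := by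
  have hline : HasDerivAt (fun s : ℝ => x + s • u) u 0 := by
    simpa using ((hasDerivAt_id (0 : ℝ)).smul_const u).const_add x
  have hx0 : x + (0 : ℝ) • u = x := by simp
  have hcurve : HasDerivAt (fun s : ℝ => (x + s • u, t)) (u, 0) 0 :=
    hline.prodMk (hasDerivAt_const (0 : ℝ) t)
  have hcs : HasDerivAt (fun s : ℝ => c (x + s • u)) (inner ℝ (gradient c x) u) 0 := by
    have h := (hc (x + (0 : ℝ) • u)).hasFDerivAt.comp_hasDerivAt (0 : ℝ) hline
    rw [hx0] at h
    have he : inner ℝ (gradient c x) u = fderiv ℝ c x u := by simp [gradient]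
    rw [he]
    exact h
  have hGs := hasDerivAt_rieszFst_curve hD hcurve
  have hn := hasDerivAt_norm_curve hGs (hne _)
  have ht : HasDerivAt (fun s : ℝ => fderiv ℝ φ (x + s • u, t) (0, 1))
      (fderiv ℝ (fderiv ℝ φ) (x, t) (u, 0) (0, 1)) 0 := by
    have hev : HasFDerivAt (fun z => fderiv ℝ φ z (0, 1))
        ((fderiv ℝ (fderiv ℝ φ) (x + (0 : ℝ) • u, t)).flip (0, 1)) (x + (0 : ℝ) • u, t) := by
      simpa using (hD (x + (0 : ℝ) • u, t)).hasFDerivAt.clm_apply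
        (hasFDerivAt_const ((0, 1) : E × ℝ) _)
    have h := HasFDerivAt.comp_hasDerivAt (f := fun s : ℝ => (x + s • u, t)) (0 : ℝ) hev hcurve
    rw [hx0] at h
    exact h
  have hsum := ht.add (hcs.mul hn)
  have hzero : HasDerivAt (fun _ : ℝ => (0 : ℝ)) 0 0 := hasDerivAt_const _ _
  have huniq := hsum.unique (hzero.congr_of_eventuallyEq
    (Filter.Eventually.of_forall fun s => heik (x + s • u) t))
  simpa only [Function.comp_apply, hx0] using huniq

end RayHelpers

/-- The paper's claim relating wavefronts and rays: if the phase `φ` solves the eikonal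
equation `∂ₜφ + c‖∇ₓφ‖ = 0`, then the gradient `p(t) = ∇ₓφ(x(t), t)` of the phase
transported along the characteristic curves `x' = c(x) ∇ₓφ / ‖∇ₓφ‖` satisfies the second
ray equation `p' = -‖p‖ ∇c(x)`; that is, `(x, p)` solves the bicharacteristic system. -/
theorem ray_equation_along_characteristic (c : EuclideanSpace ℝ (Fin 2) → ℝ)
    (hc : ContDiff ℝ 1 c) (hcpos : ∀ x, 0 < c x)
    (φ : EuclideanSpace ℝ (Fin 2) × ℝ → ℝ) (hφ : ContDiff ℝ 2 φ)
    (hgrad : ∀ (x : EuclideanSpace ℝ (Fin 2)) (t : ℝ),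
      gradient (fun y => φ (y, t)) x ≠ 0)
    (heik : ∀ (x : EuclideanSpace ℝ (Fin 2)) (t : ℝ),
      deriv (fun τ => φ (x, τ)) t + c x * ‖gradient (fun y => φ (y, t)) x‖ = 0)
    (x : ℝ → EuclideanSpace ℝ (Fin 2))
    (hx : ∀ t, HasDerivAt x
      ((c (x t) / ‖gradient (fun y => φ (y, t)) (x t)‖) •
        gradient (fun y => φ (y, t)) (x t)) t)
    (p : ℝ → EuclideanSpace ℝ (Fin 2))
    (hp : ∀ t, p t = gradient (fun y => φ (y, t)) (x t)) :
    ∀ t, HasDerivAt p (-(‖p t‖ • gradient c (x t))) t := by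
  intro t
  have hφ1 : Differentiable ℝ φ := hφ.differentiable (by norm_num)
  have hD : Differentiable ℝ (fderiv ℝ φ) :=
    (hφ.fderiv_right (m := 1) (by norm_num)).differentiable (by norm_num)
  have hcd : Differentiable ℝ c := hc.differentiable (by norm_num)
  simp only [gradient_slice hφ1, deriv_slice hφ1] at hgrad heik hx hp
  have hpd := hasDerivAt_rieszFst_curve hD ((hx t).prodMk (hasDerivAt_id' t))
  have hpeq : p = fun s => rieszFst (fderiv ℝ φ (x s, s)) := funext hp
  have hkey := eikonal_deriv hcd hD (fun z => hgrad z.1 z.2) heik (x t) t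
  have hsymm : IsSymmSndFDerivAt ℝ φ (x t, t) :=
    hφ.contDiffAt.isSymmSndFDerivAt (by simp)
  rw [hp t, hpeq]
  refine hpd.congr_deriv (ext_inner_right ℝ fun u => ?_)
  specialize hkey u
  rw [inner_rieszFst, hsymm.eq]
  set G := rieszFst (fderiv ℝ φ (x t, t)) with hG
  set A := fderiv ℝ (fderiv ℝ φ) (x t, t) (u, 0) with hA
  have hsplit : ((c (x t) / ‖G‖) • G, (1 : ℝ)) = (c (x t) / ‖G‖) • (G, (0 : ℝ)) + (0, 1) := by
    simp
  rw [hsplit, map_add, map_smul, ← inner_rieszFst A G, real_inner_comm, inner_neg_left,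
    real_inner_smul_left, smul_eq_mul]
  linear_combination hkey
end
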